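/- Let d be a bounded continuous pseudo-metric on a Polish space X and let μ₁, μ₂ be finite positive Borel measures with equal mass. Then inf_{π ∈ C(μ₁,μ₂)} ∫_{X²} d(x,y) dπ(x,y) = sup { ∫ φ d(μ₁ − μ₂) : φ is d-Lipschitz with constant 1 }. -/

import Mathlib

open MeasureTheory

open ProbabilityTheory Set Filter TopologicalSpace
open scoped Topology

/-!
Integrating `φ x - φ y ≤ d x y` against a coupling gives `sup ≤ inf`. Conversely, send each point
of `X` to a nearby point of a finite set `{y₀, …, yₙ}`, at an average cost as small as desired.
On a finite set the duality is a minimax statement for the Lagrangian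
`∑ f a - ∑ g b + ∑ w (c - f + g)`: an optimal `w` has marginals `a` and `b`, since otherwise `f` and
`g` could be scaled to make the Lagrangian arbitrarily large. Dual potentials `f i ≤ d yᵢ yⱼ + g j`
are separated by the `d`-Lipschitz function `x ↦ min_j (d x yⱼ + g j)`, so the finite dual value is
at most the supremum plus the discretization error. Finally, a coupling of the discretized measures
lifts to `X`: choose a pair of cells with it, then a point in each cell independently from the
conditional laws of `μ₁` and `μ₂`.
-/

section Coupling

variable {X Y : Type*} [MeasurableSpace X] [MeasurableSpace Y]

/-- `π` is a coupling (transport plan) of `μ` and `ν`; `{π | IsCoupling π μ₁ μ₂}` is the set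
`C(μ₁, μ₂)` of the paper. No normalisation is imposed, so `μ` and `ν` may have any mass. -/
structure IsCoupling (π : Measure (X × Y)) (μ : Measure X) (ν : Measure Y) : Prop where
  map_fst : π.map Prod.fst = μ
  map_snd : π.map Prod.snd = ν

namespace IsCoupling

variable {π : Measure (X × Y)} {μ : Measure X} {ν : Measure Y}

theorem isFiniteMeasure [IsFiniteMeasure μ] (h : IsCoupling π μ ν) : IsFiniteMeasure π := by
  have : IsFiniteMeasure (π.map Prod.fst) := h.map_fst ▸ inferInstance
  exact Measure.isFiniteMeasure_of_map measurable_fst.aemeasurable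

theorem measurePreserving_fst (h : IsCoupling π μ ν) : MeasurePreserving Prod.fst π μ :=
  ⟨measurable_fst, h.map_fst⟩

theorem measurePreserving_snd (h : IsCoupling π μ ν) : MeasurePreserving Prod.snd π ν :=
  ⟨measurable_snd, h.map_snd⟩

theorem integrable_comp_fst {f : X → ℝ} (h : IsCoupling π μ ν) (hf : Integrable f μ) :
    Integrable (fun p => f p.1) π :=
  h.measurePreserving_fst.integrable_comp_of_integrable hf

theorem integrable_comp_snd {f : Y → ℝ} (h : IsCoupling π μ ν) (hf : Integrable f ν) :
    Integrable (fun p => f p.2) π :=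
  h.measurePreserving_snd.integrable_comp_of_integrable hf

theorem integral_comp_fst {f : X → ℝ} (h : IsCoupling π μ ν) (hf : AEStronglyMeasurable f μ) :
    ∫ p, f p.1 ∂π = ∫ x, f x ∂μ := by
  rw [← h.map_fst] at hf ⊢
  exact (integral_map measurable_fst.aemeasurable hf).symm

theorem integral_comp_snd {f : Y → ℝ} (h : IsCoupling π μ ν) (hf : AEStronglyMeasurable f ν) :
    ∫ p, f p.2 ∂π = ∫ y, f y ∂ν := by
  rw [← h.map_snd] at hf ⊢
  exact (integral_map measurable_snd.aemeasurable hf).symm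

end IsCoupling

theorem isCoupling_smul_prod {μ : Measure X} {ν : Measure Y} [IsFiniteMeasure μ]
    [IsFiniteMeasure ν] (hmass : μ univ = ν univ) :
    IsCoupling ((μ univ)⁻¹ • μ.prod ν) μ ν := by
  rcases eq_or_ne (μ univ) 0 with hμ | hμ
  · obtain rfl := Measure.measure_univ_eq_zero.1 hμ
    obtain rfl := Measure.measure_univ_eq_zero.1 (hmass.symm.trans hμ)
    constructor <;> simp
  · constructor
    · rw [Measure.map_smul, Measure.map_fst_prod, smul_smul, ← hmass,
        ENNReal.inv_mul_cancel hμ (measure_ne_top μ _), one_smul]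
    · rw [Measure.map_smul, Measure.map_snd_prod, smul_smul,
        ENNReal.inv_mul_cancel hμ (measure_ne_top μ _), one_smul]

theorem exists_kernel_comp_map_eq {I : Type*} [Countable I] [MeasurableSpace I]
    [MeasurableSingletonClass I] (μ : Measure X) [IsFiniteMeasure μ] {T : X → I}
    (hT : Measurable T) :
    ∃ κ : Kernel I X, IsFiniteKernel κ ∧ κ ∘ₘ μ.map T = μ ∧
      ∀ᵐ i ∂μ.map T, (κ i).map T = Measure.dirac i := by
  have hfiber (i : I) : MeasurableSet (T ⁻¹' {i}) := hT (measurableSet_singleton i)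
  have hmap (i : I) : μ.map T {i} = μ (T ⁻¹' {i}) :=
    Measure.map_apply hT (measurableSet_singleton i)
  refine ⟨Kernel.ofFunOfCountable fun i => μ[|T ⁻¹' {i}],
    ⟨1, by simp, fun i => (prob_le_one : μ[|T ⁻¹' {i}] univ ≤ 1)⟩,
    ?_, ae_iff_of_countable.2 fun i hi => ?_⟩
  · have hterm (i : I) : μ.map T {i} • μ[|T ⁻¹' {i}] = μ.restrict (T ⁻¹' {i}) := by
      rw [hmap]
      rcases eq_or_ne (μ (T ⁻¹' {i})) 0 with hi | hi
      · rw [hi, zero_smul, Measure.restrict_eq_zero.2 hi]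
      · rw [ProbabilityTheory.cond, smul_smul, ENNReal.mul_inv_cancel hi (measure_ne_top μ _),
          one_smul]
    refine Measure.comp_eq_sum_of_countable.trans ((congrArg Measure.sum (funext hterm)).trans ?_)
    rw [← Measure.restrict_iUnion _ hfiber, ← preimage_iUnion, iUnion_of_singleton, preimage_univ,
      Measure.restrict_univ]
    exact fun i j hij => (disjoint_singleton.2 hij).preimage T
  · change (μ[|T ⁻¹' {i}]).map T = Measure.dirac i
    rw [ProbabilityTheory.cond, Measure.map_smul, ← Measure.restrict_map hT
      (measurableSet_singleton i), Measure.restrict_singleton, smul_smul, ← hmap,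
      ENNReal.inv_mul_cancel hi (measure_ne_top _ _), one_smul]

theorem IsCoupling.parallelComp_comp {I J : Type*} [MeasurableSpace I] [MeasurableSpace J]
    {γ : Measure (I × J)} {μ : Measure I} {ν : Measure J} (hγ : IsCoupling γ μ ν)
    {κ : Kernel I X} {η : Kernel J Y} [IsSFiniteKernel κ] [IsSFiniteKernel η]
    (hκ : ∀ᵐ i ∂μ, κ i univ = 1) (hη : ∀ᵐ j ∂ν, η j univ = 1) :
    IsCoupling ((κ ∥ₖ η) ∘ₘ γ) (κ ∘ₘ μ) (η ∘ₘ ν) where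
  map_fst := by
    have hfst : (κ ∥ₖ η).map Prod.fst =ᵐ[γ]
        (κ ∘ₖ Kernel.deterministic Prod.fst measurable_fst : Kernel (I × J) X) := by
      filter_upwards [hγ.measurePreserving_snd.quasiMeasurePreserving.ae hη] with p hp
      rw [Kernel.map_apply _ measurable_fst, Kernel.parallelComp_apply, Measure.map_fst_prod, hp,
        one_smul, Kernel.comp_deterministic_eq_comap, Kernel.comap_apply]
    rw [Measure.map_comp _ _ measurable_fst, Measure.bind_congr_right hfst,
      ← Measure.comp_assoc, Measure.deterministic_comp_eq_map, hγ.map_fst]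
  map_snd := by
    have hsnd : (κ ∥ₖ η).map Prod.snd =ᵐ[γ]
        (η ∘ₖ Kernel.deterministic Prod.snd measurable_snd : Kernel (I × J) Y) := by
      filter_upwards [hγ.measurePreserving_fst.quasiMeasurePreserving.ae hκ] with p hp
      rw [Kernel.map_apply _ measurable_snd, Kernel.parallelComp_apply, Measure.map_snd_prod, hp,
        one_smul, Kernel.comp_deterministic_eq_comap, Kernel.comap_apply]
    rw [Measure.map_comp _ _ measurable_snd, Measure.bind_congr_right hsnd,
      ← Measure.comp_assoc, Measure.deterministic_comp_eq_map, hγ.map_snd]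

theorem measure_univ_eq_one_of_map_eq_dirac {I : Type*} [MeasurableSpace I] {μ : Measure X}
    {T : X → I} (hT : Measurable T) {i : I} (h : μ.map T = Measure.dirac i) : μ univ = 1 := by
  rw [← preimage_univ (f := T), ← Measure.map_apply hT .univ, h, measure_univ]

theorem IsCoupling.exists_map_prodMap_eq {I J : Type*} [Countable I] [Countable J]
    [MeasurableSpace I] [MeasurableSingletonClass I] [MeasurableSpace J]
    [MeasurableSingletonClass J] {μ : Measure X} {ν : Measure Y} [IsFiniteMeasure μ]
    [IsFiniteMeasure ν] {T : X → I} {S : Y → J} (hT : Measurable T) (hS : Measurable S)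
    {γ : Measure (I × J)} (hγ : IsCoupling γ (μ.map T) (ν.map S)) :
    ∃ π, IsCoupling π μ ν ∧ π.map (Prod.map T S) = γ := by
  obtain ⟨κ, _, hκμ, hκ⟩ := exists_kernel_comp_map_eq μ hT
  obtain ⟨η, _, hην, hη⟩ := exists_kernel_comp_map_eq ν hS
  refine ⟨(κ ∥ₖ η) ∘ₘ γ, ?_, ?_⟩
  · have hπ := hγ.parallelComp_comp
      (hκ.mono fun _ => measure_univ_eq_one_of_map_eq_dirac hT)
      (hη.mono fun _ => measure_univ_eq_one_of_map_eq_dirac hS)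
    rwa [hκμ, hην] at hπ
  · have hdirac : (κ ∥ₖ η).map (Prod.map T S) =ᵐ[γ] Measure.dirac := by
      filter_upwards [hγ.measurePreserving_fst.quasiMeasurePreserving.ae hκ,
        hγ.measurePreserving_snd.quasiMeasurePreserving.ae hη] with p hκp hηp
      rw [Kernel.map_apply _ (hT.prodMap hS), Kernel.parallelComp_apply,
        ← Measure.map_prod_map _ _ hT hS, hκp, hηp, Measure.dirac_prod_dirac]
    rw [Measure.map_comp _ _ (hT.prodMap hS), Measure.bind_congr_right hdirac,
      Measure.bind_dirac]

end Coupling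

section Minimax

theorem exists_forall_le_of_forall_exists_le {E F β : Type*}
    [TopologicalSpace E] [AddCommGroup E] [Module ℝ E] [IsTopologicalAddGroup E]
    [ContinuousSMul ℝ E]
    [TopologicalSpace F] [AddCommGroup F] [Module ℝ F] [IsTopologicalAddGroup F]
    [ContinuousSMul ℝ F]
    [LinearOrder β] [DenselyOrdered β] {X : Set E} {Y : Set F} {f : E → F → β} {t : β}
    (hX : X.Nonempty) (hXcompact : IsCompact X) (hXconvex : Convex ℝ X) (hYconvex : Convex ℝ Y)
    (hlsc : ∀ y ∈ Y, LowerSemicontinuousOn (f · y) X)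
    (hconvex : ∀ y ∈ Y, QuasiconvexOn ℝ X (f · y))
    (husc : ∀ x ∈ X, UpperSemicontinuousOn (f x) Y)
    (hconcave : ∀ x ∈ X, QuasiconcaveOn ℝ Y (f x))
    (h : ∀ y ∈ Y, ∃ x ∈ X, f x y ≤ t) : ∃ x ∈ X, ∀ y ∈ Y, f x y ≤ t := by
  by_contra! hlt
  have hempty : X ∩ ⋂ y ∈ Y, (f · y) ⁻¹' Iic t = ∅ := by
    refine eq_empty_of_forall_notMem fun x ⟨hx, hxY⟩ => ?_
    obtain ⟨y, hy, hty⟩ := hlt x hx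
    exact hty.not_ge (mem_iInter₂.1 hxY y hy)
  obtain ⟨s, hs⟩ :=
    (LowerSemicontinuousOn.inter_biInter_preimage_Iic_eq_empty_iff_exists_finset
      hXcompact hlsc).1 hempty
  obtain ⟨y, hy, hty⟩ := Sion.exists_lt_iInf_of_lt_iInf_of_finite hX hXcompact hlsc hconvex
    hYconvex husc hconcave hXconvex (s.finite_toSet.image Subtype.val)
    (image_subset_iff.2 fun y _ => y.2) fun x hx =>
      let ⟨y, hys, hty⟩ := hs x hx
      ⟨y, mem_image_of_mem _ hys, hty⟩
  obtain ⟨x, hx, hxt⟩ := h y hy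
  exact hxt.not_gt (hty x hx)

theorem eq_zero_of_forall_mul_add_le {x y t : ℝ} (h : ∀ s : ℝ, s * x + y ≤ t) : x = 0 := by
  by_contra hx
  have := h ((t - y + 1) / x)
  rw [div_mul_cancel₀ _ hx] at this
  linarith

theorem exists_mem_stdSimplex_forall_sum_mul_le {ι F : Type*} [Fintype ι] [Nonempty ι]
    [TopologicalSpace F] [AddCommGroup F] [Module ℝ F] [IsTopologicalAddGroup F]
    [ContinuousSMul ℝ F] {Y : Set F} {f : ι → F → ℝ} {t : ℝ} (hY : Convex ℝ Y)
    (hcont : ∀ i, ContinuousOn (f i) Y) (hconcave : ∀ i, ConcaveOn ℝ Y (f i))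
    (h : ∀ y ∈ Y, ∃ i, f i y ≤ t) : ∃ p ∈ stdSimplex ℝ ι, ∀ y ∈ Y, ∑ i, p i * f i y ≤ t := by
  classical
  refine exists_forall_le_of_forall_exists_le (f := fun p y => ∑ i, p i * f i y)
    ⟨_, single_mem_stdSimplex ℝ (Classical.arbitrary ι)⟩ (isCompact_stdSimplex ℝ ι)
    (convex_stdSimplex ℝ ι) hY ?_ ?_ ?_ ?_ fun y hy => ?_
  · exact fun y _ => Continuous.continuousOn (by fun_prop) |>.lowerSemicontinuousOn
  · exact fun y _ => (((dotProductBilin ℝ ℝ).flip (f · y)).convexOn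
      (convex_stdSimplex ℝ ι)).quasiconvexOn
  · exact fun p _ => ContinuousOn.upperSemicontinuousOn (by fun_prop)
  · refine fun p hp => ConcaveOn.quasiconcaveOn ⟨hY, fun y hy z hz r s hr hs hrs => ?_⟩
    simp only [smul_eq_mul, Finset.mul_sum, ← Finset.sum_add_distrib]
    refine Finset.sum_le_sum fun i _ => ?_
    have := mul_le_mul_of_nonneg_left ((hconcave i).2 hy hz hr hs hrs) (hp.1 i)
    simp only [smul_eq_mul] at this
    linarith
  · obtain ⟨i, hi⟩ := h y hy
    exact ⟨Pi.single i 1, single_mem_stdSimplex ℝ i, by simpa [Pi.single_apply] using hi⟩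

end Minimax

section Finite

variable {I J : Type*} [Fintype I] [Fintype J]

theorem marginals_of_forall_lagrangian_le {a : I → ℝ} {b : J → ℝ} {c w : I × J → ℝ} {t : ℝ}
    (h : ∀ (f : I → ℝ) (g : J → ℝ), ∑ i, f i * a i - ∑ j, g j * b j +
      ∑ q, w q * (c q - f q.1 + g q.2) ≤ t) :
    (∀ i, ∑ j, w (i, j) = a i) ∧ (∀ j, ∑ i, w (i, j) = b j) ∧ ∑ q, w q * c q ≤ t := by
  classical
  have hle (f : I → ℝ) (g : J → ℝ) : ∑ i, f i * (a i - ∑ j, w (i, j)) +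
      ∑ j, g j * (∑ i, w (i, j) - b j) + ∑ q, w q * c q ≤ t := by
    have hf : ∑ q, w q * f q.1 = ∑ i, f i * ∑ j, w (i, j) := by
      simp only [Fintype.sum_prod_type, ← Finset.sum_mul, mul_comm (f _)]
    have hg : ∑ q, w q * g q.2 = ∑ j, g j * ∑ i, w (i, j) := by
      simp only [Fintype.sum_prod_type_right, ← Finset.sum_mul, mul_comm (g _)]
    convert h f g using 1
    simp only [mul_sub, mul_add, Finset.sum_sub_distrib, Finset.sum_add_distrib, hf, hg]
    ring
  refine ⟨fun i => ?_, fun j => ?_, by simpa using hle 0 0⟩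
  · have (s : ℝ) : s * (a i - ∑ j, w (i, j)) + ∑ q, w q * c q ≤ t := by
      simpa [Pi.single_apply] using hle (Pi.single i s) 0
    exact (sub_eq_zero.1 (eq_zero_of_forall_mul_add_le this)).symm
  · have (s : ℝ) : s * (∑ i, w (i, j) - b j) + ∑ q, w q * c q ≤ t := by
      simpa [Pi.single_apply] using hle 0 (Pi.single j s)
    exact sub_eq_zero.1 (eq_zero_of_forall_mul_add_le this)

theorem exists_weights_of_forall_potentials [Nonempty I] [Nonempty J] {a : I → ℝ} {b : J → ℝ}
    {M t : ℝ} (hM : 0 ≤ M) (ha : ∑ i, a i = M) (c : I × J → ℝ)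
    (h : ∀ (f : I → ℝ) (g : J → ℝ), (∀ i j, f i ≤ c (i, j) + g j) →
      ∑ i, f i * a i - ∑ j, g j * b j ≤ t) :
    ∃ w : I × J → ℝ, (∀ q, 0 ≤ w q) ∧ (∀ i, ∑ j, w (i, j) = a i) ∧
      (∀ j, ∑ i, w (i, j) = b j) ∧ ∑ q, w q * c q ≤ t := by
  let L (q : I × J) (u : (I → ℝ) × (J → ℝ)) : ℝ :=
    ∑ i, u.1 i * a i - ∑ j, u.2 j * b j + M * (c q - u.1 q.1 + u.2 q.2)
  have hconcave (q : I × J) : ConcaveOn ℝ univ (L q) := by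
    refine ⟨convex_univ, fun u _ v _ r s _ _ hrs => le_of_eq ?_⟩
    obtain rfl : s = 1 - r := by linarith
    simp only [L, smul_eq_mul, Prod.fst_add, Prod.snd_add, Prod.smul_fst, Prod.smul_snd,
      Pi.add_apply, Pi.smul_apply, add_mul, mul_assoc, Finset.sum_add_distrib, ← Finset.mul_sum]
    ring
  have hmin (u : (I → ℝ) × (J → ℝ)) : ∃ q, L q u ≤ t := by
    -- Raising `u.1` by the least slack keeps `u` admissible and turns its dual value into `L q u`.
    obtain ⟨q, hq⟩ := Finite.exists_min fun q : I × J => c q - u.1 q.1 + u.2 q.2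
    refine ⟨q, le_of_eq_of_le ?_ (h (fun i => u.1 i + (c q - u.1 q.1 + u.2 q.2)) u.2
      fun i j => by linarith [hq (i, j)])⟩
    simp only [L, add_mul, Finset.sum_add_distrib, ← Finset.mul_sum, ha]
    ring
  obtain ⟨p, hp, hpL⟩ := exists_mem_stdSimplex_forall_sum_mul_le convex_univ
    (fun q => Continuous.continuousOn (by fun_prop)) hconcave fun u _ => hmin u
  refine ⟨M • p, fun q => mul_nonneg hM (hp.1 q),
    marginals_of_forall_lagrangian_le fun f g => le_of_eq_of_le ?_ (hpL (f, g) (mem_univ _))⟩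
  have hpq (q : I × J) : p q * L q (f, g) =
      p q * (∑ i, f i * a i - ∑ j, g j * b j) + (M • p) q * (c q - f q.1 + g q.2) := by
    simp only [L, Pi.smul_apply, smul_eq_mul]
    ring
  simp only [hpq, Finset.sum_add_distrib, ← Finset.sum_mul, hp.2, one_mul]

theorem isCoupling_sum_smul_dirac [MeasurableSpace I] [MeasurableSingletonClass I]
    [MeasurableSpace J] [MeasurableSingletonClass J] {μ : Measure I} {ν : Measure J}
    [IsFiniteMeasure μ] [IsFiniteMeasure ν] {w : I × J → ℝ} (hw : ∀ q, 0 ≤ w q)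
    (hμ : ∀ i, ∑ j, w (i, j) = μ.real {i}) (hν : ∀ j, ∑ i, w (i, j) = ν.real {j}) :
    IsCoupling (∑ q, ENNReal.ofReal (w q) • Measure.dirac q) μ ν where
  map_fst := by
    classical
    refine Measure.ext_of_singleton fun i => ?_
    rw [Measure.map_apply measurable_fst (measurableSet_singleton i),
      ← ofReal_measureReal (μ := μ), ← hμ,
      ENNReal.ofReal_sum_of_nonneg fun j _ => hw (i, j)]
    simp [Fintype.sum_prod_type, indicator_apply]
  map_snd := by
    classical
    refine Measure.ext_of_singleton fun j => ?_
    rw [Measure.map_apply measurable_snd (measurableSet_singleton j),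
      ← ofReal_measureReal (μ := ν), ← hν,
      ENNReal.ofReal_sum_of_nonneg fun i _ => hw (i, j)]
    simp [Fintype.sum_prod_type_right, indicator_apply]

theorem integral_sum_smul_dirac {ι : Type*} [Fintype ι] [MeasurableSpace ι]
    [MeasurableSingletonClass ι] {w : ι → ℝ} (hw : ∀ i, 0 ≤ w i) (c : ι → ℝ) :
    ∫ i, c i ∂(∑ i, ENNReal.ofReal (w i) • Measure.dirac i) = ∑ i, w i * c i := by
  rw [integral_finsetSum_measure fun i _ => (integrable_dirac enorm_lt_top).smul_measure
    ENNReal.ofReal_ne_top]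
  simp [hw]

end Finite

theorem exists_isCoupling_integral_le_of_forall_potentials {I J : Type*} [Finite I] [Finite J]
    [Nonempty I] [Nonempty J] [MeasurableSpace I] [MeasurableSingletonClass I] [MeasurableSpace J]
    [MeasurableSingletonClass J] {μ : Measure I} {ν : Measure J} [IsFiniteMeasure μ]
    [IsFiniteMeasure ν] (c : I × J → ℝ) {t : ℝ}
    (h : ∀ (f : I → ℝ) (g : J → ℝ), (∀ i j, f i ≤ c (i, j) + g j) →
      ∫ i, f i ∂μ - ∫ j, g j ∂ν ≤ t) :
    ∃ γ, IsCoupling γ μ ν ∧ ∫ q, c q ∂γ ≤ t := by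
  have := Fintype.ofFinite I
  have := Fintype.ofFinite J
  obtain ⟨w, hw, hμ, hν, hwc⟩ := exists_weights_of_forall_potentials measureReal_nonneg
    (a := fun i => μ.real {i}) (b := fun j => ν.real {j}) (M := μ.real univ) (by simp) c
    fun f g hfg => by simpa [integral_fintype, mul_comm] using h f g hfg
  exact ⟨_, isCoupling_sum_smul_dirac hw hμ hν, (integral_sum_smul_dirac hw c).trans_le hwc⟩

section Lipschitz

variable {X : Type*} [PseudoMetricSpace X]

theorem exists_lipschitzWith_one_between {ι : Type*} [Nonempty ι] {y : ι → X} {f g : ι → ℝ}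
    (hfg : ∀ i j, f i ≤ dist (y i) (y j) + g j) :
    ∃ φ : X → ℝ, LipschitzWith 1 φ ∧ ∀ i, f i ≤ φ (y i) ∧ φ (y i) ≤ g i := by
  have hbdd (x : X) : BddBelow (range fun j => dist x (y j) + g j) := by
    obtain ⟨i⟩ := ‹Nonempty ι›
    refine ⟨f i - dist (y i) x, ?_⟩
    rintro _ ⟨j, rfl⟩
    have := dist_triangle (y i) x (y j)
    linarith [hfg i j]
  refine ⟨fun x => ⨅ j, dist x (y j) + g j, LipschitzWith.of_le_add fun x z => ?_,
    fun i => ⟨le_ciInf (hfg i), (ciInf_le (hbdd (y i)) i).trans_eq (by simp)⟩⟩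
  rw [← sub_le_iff_le_add]
  refine le_ciInf fun j => ?_
  have := dist_triangle x z (y j)
  linarith [ciInf_le (hbdd x) j]

theorem abs_integral_comp_sub_integral_comp_le_integral_dist {Ω : Type*} [MeasurableSpace Ω]
    {P : Measure Ω} {F G : Ω → X} {φ : X → ℝ} (hφ : LipschitzWith 1 φ)
    (hF : Integrable (fun ω => φ (F ω)) P) (hG : Integrable (fun ω => φ (G ω)) P)
    (hFG : Integrable (fun ω => dist (F ω) (G ω)) P) :
    |∫ ω, φ (F ω) ∂P - ∫ ω, φ (G ω) ∂P| ≤ ∫ ω, dist (F ω) (G ω) ∂P := by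
  rw [← integral_sub hF hG, ← Real.norm_eq_abs]
  exact norm_integral_le_of_norm_le hFG
    (ae_of_all _ fun ω => by simpa [← dist_eq_norm] using hφ.dist_le_mul (F ω) (G ω))

variable [MeasurableSpace X] [OpensMeasurableSpace X]

theorem integrable_of_lipschitzWith_one {μ : Measure X} [IsFiniteMeasure μ]
    (hμ : ∀ x, Integrable (dist x) μ) {φ : X → ℝ} (hφ : LipschitzWith 1 φ) :
    Integrable φ μ := by
  rcases isEmpty_or_nonempty X with _ | ⟨⟨x₀⟩⟩
  · simp [Measure.eq_zero_of_isEmpty μ]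
  refine ((integrable_const ‖φ x₀‖).add (hμ x₀)).mono' hφ.continuous.aestronglyMeasurable
    (ae_of_all _ fun x => ?_)
  calc ‖φ x‖ ≤ ‖φ x₀‖ + dist (φ x₀) (φ x) := norm_le_norm_add_norm_sub ..
    _ ≤ ‖φ x₀‖ + dist x₀ x := by gcongr; simpa using hφ.dist_le_mul x₀ x

theorem exists_measurable_fin_integral_dist_lt [SeparableSpace X] [Nonempty X] {μ : Measure X}
    (hμ : ∀ x, Integrable (dist x) μ) {ε : ℝ} (hε : 0 < ε) :
    ∃ (n : ℕ) (T : X → Fin n) (y : Fin n → X), Measurable T ∧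
      Integrable (fun x => dist x (y (T x))) μ ∧ ∫ x, dist x (y (T x)) ∂μ < ε := by
  have := UniformSpace.secondCountable_of_separable X
  let e := denseSeq X
  let nearest := SimpleFunc.nearestPt e
  have hmeas (N : ℕ) : Measurable fun x => dist x (nearest N x) :=
    measurable_id.dist (nearest N).measurable
  have hle (N : ℕ) (x : X) : ‖dist x (nearest N x)‖ ≤ dist (e 0) x := by
    have := SimpleFunc.edist_nearestPt_le e x N.zero_le
    rw [edist_nndist, edist_nndist, ENNReal.coe_le_coe] at this
    rw [Real.norm_of_nonneg dist_nonneg, dist_comm]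
    exact this
  have hlim : Tendsto (fun N => ∫ x, dist x (nearest N x) ∂μ) atTop (𝓝 (∫ _, 0 ∂μ)) := by
    refine tendsto_integral_of_dominated_convergence (dist (e 0))
      (fun N => (hmeas N).aestronglyMeasurable) (hμ _) (fun N => ae_of_all _ (hle N))
      (ae_of_all _ fun x => ?_)
    have hx : x ∈ closure (range e) := denseRange_denseSeq X x
    rw [← dist_self x]
    exact tendsto_const_nhds.dist (SimpleFunc.tendsto_nearestPt hx)
  obtain ⟨N, hN⟩ := (hlim.eventually_lt_const (by simpa using hε)).exists
  refine ⟨N + 1, fun x => ⟨SimpleFunc.nearestPtInd e N x,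
    Nat.lt_succ_of_le (SimpleFunc.nearestPtInd_le e N x)⟩, fun i => e i, ?_, ?_, hN⟩
  · refine measurable_to_countable' fun i => ?_
    simpa [Fin.ext_iff, preimage] using (SimpleFunc.nearestPtInd e N).measurableSet_fiber i
  · exact (hμ (e 0)).mono' (hmeas N).aestronglyMeasurable (ae_of_all _ (hle N))

variable {μ ν : Measure X}

theorem IsCoupling.integrable_dist [SeparableSpace X] {π : Measure (X × X)}
    (hπ : IsCoupling π μ ν) (hμ : ∀ x, Integrable (dist x) μ)
    (hν : ∀ x, Integrable (dist x) ν) : Integrable (fun p => dist p.1 p.2) π := by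
  have := UniformSpace.secondCountable_of_separable X
  rcases isEmpty_or_nonempty X with _ | ⟨⟨x₀⟩⟩
  · simp [Measure.eq_zero_of_isEmpty π]
  exact ((hπ.integrable_comp_fst (hμ x₀)).add (hπ.integrable_comp_snd (hν x₀))).mono'
    (measurable_fst.dist measurable_snd).aestronglyMeasurable
    (ae_of_all _ fun p => by simpa [dist_comm p.1] using dist_triangle p.1 x₀ p.2)

variable [IsFiniteMeasure μ]

theorem abs_integral_sub_integral_map_le_integral_dist {I : Type*} [Finite I] [MeasurableSpace I]
    [MeasurableSingletonClass I] {T : X → I} {y : I → X} (hT : Measurable T)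
    (hμ : ∀ x, Integrable (dist x) μ) (hTμ : Integrable (fun x => dist x (y (T x))) μ)
    {φ : X → ℝ} (hφ : LipschitzWith 1 φ) :
    |∫ x, φ x ∂μ - ∫ i, φ (y i) ∂μ.map T| ≤ ∫ x, dist x (y (T x)) ∂μ := by
  have hint : Integrable (fun i => φ (y i)) (μ.map T) := .of_finite
  rw [integral_map hT.aemeasurable hint.1]
  exact abs_integral_comp_sub_integral_comp_le_integral_dist hφ
    (integrable_of_lipschitzWith_one hμ hφ) (hint.comp_measurable hT) hTμ

theorem IsCoupling.integral_dist_le_integral_dist_comp_add [SeparableSpace X]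
    {I : Type*} [Finite I] [MeasurableSpace I] [MeasurableSingletonClass I] {T : X → I}
    {y : I → X} {π : Measure (X × X)} (hπ : IsCoupling π μ ν) (hT : Measurable T)
    (hμ : ∀ x, Integrable (dist x) μ) (hν : ∀ x, Integrable (dist x) ν)
    (hTμ : Integrable (fun x => dist x (y (T x))) μ)
    (hTν : Integrable (fun x => dist x (y (T x))) ν) :
    ∫ p, dist p.1 p.2 ∂π ≤ ∫ p, dist (y (T p.1)) (y (T p.2)) ∂π +
      ∫ x, dist x (y (T x)) ∂μ + ∫ x, dist x (y (T x)) ∂ν := by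
  have := hπ.isFiniteMeasure
  have hTint : Integrable (fun p : X × X => dist (y (T p.1)) (y (T p.2))) π :=
    (Integrable.of_finite (f := fun q : I × I => dist (y q.1) (y q.2))).comp_measurable
      (hT.prodMap hT)
  have hfst := hπ.integrable_comp_fst hTμ
  have hsnd := hπ.integrable_comp_snd hTν
  rw [← hπ.integral_comp_fst hTμ.1, ← hπ.integral_comp_snd hTν.1,
    ← integral_add' hTint hfst, ← integral_add' (hTint.add hfst) hsnd]
  refine integral_mono (hπ.integrable_dist hμ hν) ((hTint.add hfst).add hsnd) fun p => ?_
  have := dist_triangle4 p.1 (y (T p.1)) (y (T p.2)) p.2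
  simp only [Pi.add_apply]
  linarith [dist_comm p.2 (y (T p.2))]

variable [IsFiniteMeasure ν]

theorem IsCoupling.integral_sub_integral_le_integral_dist [SeparableSpace X]
    {π : Measure (X × X)} (hπ : IsCoupling π μ ν) (hμ : ∀ x, Integrable (dist x) μ)
    (hν : ∀ x, Integrable (dist x) ν) {φ : X → ℝ} (hφ : LipschitzWith 1 φ) :
    ∫ x, φ x ∂μ - ∫ x, φ x ∂ν ≤ ∫ p, dist p.1 p.2 ∂π := by
  have hφμ := integrable_of_lipschitzWith_one hμ hφ
  have hφν := integrable_of_lipschitzWith_one hν hφ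
  rw [← hπ.integral_comp_fst hφμ.1, ← hπ.integral_comp_snd hφν.1]
  exact (le_abs_self _).trans <| abs_integral_comp_sub_integral_comp_le_integral_dist hφ
    (hπ.integrable_comp_fst hφμ) (hπ.integrable_comp_snd hφν) (hπ.integrable_dist hμ hν)

theorem exists_isCoupling_integral_dist_comp_le {I : Type*} [Finite I] [Nonempty I]
    [MeasurableSpace I] [MeasurableSingletonClass I] {T : X → I} {y : I → X} (hT : Measurable T)
    (hμ : ∀ x, Integrable (dist x) μ) (hν : ∀ x, Integrable (dist x) ν)
    (hTμ : Integrable (fun x => dist x (y (T x))) μ)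
    (hTν : Integrable (fun x => dist x (y (T x))) ν) {S : ℝ}
    (hS : ∀ φ : X → ℝ, LipschitzWith 1 φ → ∫ x, φ x ∂μ - ∫ x, φ x ∂ν ≤ S) :
    ∃ π, IsCoupling π μ ν ∧ ∫ p, dist (y (T p.1)) (y (T p.2)) ∂π ≤
      S + ∫ x, dist x (y (T x)) ∂μ + ∫ x, dist x (y (T x)) ∂ν := by
  obtain ⟨γ, hγ, hγS⟩ := exists_isCoupling_integral_le_of_forall_potentials
    (μ := μ.map T) (ν := ν.map T) (fun q : I × I => dist (y q.1) (y q.2))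
    (t := S + ∫ x, dist x (y (T x)) ∂μ + ∫ x, dist x (y (T x)) ∂ν) fun f g hfg => by
      obtain ⟨φ, hφ, hφfg⟩ := exists_lipschitzWith_one_between hfg
      have hf : ∫ i, f i ∂μ.map T ≤ ∫ i, φ (y i) ∂μ.map T :=
        integral_mono .of_finite .of_finite fun i => (hφfg i).1
      have hg : ∫ i, φ (y i) ∂ν.map T ≤ ∫ i, g i ∂ν.map T :=
        integral_mono .of_finite .of_finite fun i => (hφfg i).2
      have hφμ := abs_le.1 (abs_integral_sub_integral_map_le_integral_dist hT hμ hTμ hφ)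
      have hφν := abs_le.1 (abs_integral_sub_integral_map_le_integral_dist hT hν hTν hφ)
      linarith [hS φ hφ]
  obtain ⟨π, hπ, rfl⟩ := hγ.exists_map_prodMap_eq hT hT
  refine ⟨π, hπ, ?_⟩
  rwa [integral_map (hT.prodMap hT).aemeasurable Measurable.of_discrete.aestronglyMeasurable]
    at hγS

theorem exists_isCoupling_integral_dist_le_add [SeparableSpace X]
    (hμ : ∀ x, Integrable (dist x) μ) (hν : ∀ x, Integrable (dist x) ν) {S ε : ℝ}
    (hS : ∀ φ : X → ℝ, LipschitzWith 1 φ → ∫ x, φ x ∂μ - ∫ x, φ x ∂ν ≤ S) (hε : 0 < ε) :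
    ∃ π, IsCoupling π μ ν ∧ ∫ p, dist p.1 p.2 ∂π ≤ S + ε := by
  rcases isEmpty_or_nonempty X with _ | _
  · have h0 : 0 ≤ S := by simpa using hS 0 (LipschitzWith.const' 0)
    exact ⟨0, ⟨Subsingleton.elim _ _, Subsingleton.elim _ _⟩, by simpa using add_nonneg h0 hε.le⟩
  obtain ⟨n, T, y, hT, hint, hlt⟩ := exists_measurable_fin_integral_dist_lt
    (fun x => (hμ x).add_measure (hν x)) (half_pos hε)
  obtain ⟨hTμ, hTν⟩ := integrable_add_measure.1 hint
  rw [integral_add_measure hTμ hTν] at hlt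
  have : Nonempty (Fin n) := ‹Nonempty X›.map T
  obtain ⟨π, hπ, hπS⟩ := exists_isCoupling_integral_dist_comp_le hT hμ hν hTμ hTν hS
  exact ⟨π, hπ, by linarith [hπ.integral_dist_le_integral_dist_comp_add hT hμ hν hTμ hTν]⟩

theorem sInf_integral_dist_eq_sSup_integral_sub [SeparableSpace X]
    (hmass : μ univ = ν univ) (hμ : ∀ x, Integrable (dist x) μ)
    (hν : ∀ x, Integrable (dist x) ν) :
    sInf {r | ∃ π, IsCoupling π μ ν ∧ r = ∫ p, dist p.1 p.2 ∂π} =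
      sSup {r | ∃ φ : X → ℝ, LipschitzWith 1 φ ∧ r = ∫ x, φ x ∂μ - ∫ x, φ x ∂ν} := by
  set cost := {r | ∃ π, IsCoupling π μ ν ∧ r = ∫ p, dist p.1 p.2 ∂π}
  set gain := {r | ∃ φ : X → ℝ, LipschitzWith 1 φ ∧ r = ∫ x, φ x ∂μ - ∫ x, φ x ∂ν}
  have hweak : ∀ s ∈ gain, ∀ r ∈ cost, s ≤ r := by
    rintro _ ⟨φ, hφ, rfl⟩ _ ⟨π, hπ, rfl⟩
    exact hπ.integral_sub_integral_le_integral_dist hμ hν hφ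
  have hcost : cost.Nonempty := ⟨_, _, isCoupling_smul_prod hmass, rfl⟩
  have hgain : gain.Nonempty := ⟨_, 0, LipschitzWith.const' 0, rfl⟩
  refine le_antisymm (le_of_forall_pos_le_add fun ε hε => ?_)
    (csSup_le hgain fun s hs => le_csInf hcost (hweak s hs))
  obtain ⟨π, hπ, hπε⟩ := exists_isCoupling_integral_dist_le_add hμ hν
    (fun φ hφ => le_csSup (hcost.mono fun r hr s hs => hweak s hs r hr) ⟨φ, hφ, rfl⟩) hε
  exact (csInf_le (hgain.mono fun s hs r => hweak s hs r) ⟨π, hπ, rfl⟩).trans hπε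

end Lipschitz

section Topology

variable {X : Type*}

/-- The pseudo-metric `d` as a bundled structure, so that `d`-Lipschitz functions become
`LipschitzWith 1` functions. Its topology is the one generated by `d`, which may be coarser than
a topology already present on `X`. -/
abbrev pseudoMetricSpaceOfDist (d : X → X → ℝ) (hd_refl : ∀ x, d x x = 0)
    (hd_symm : ∀ x y, d x y = d y x) (hd_tri : ∀ x y z, d x z ≤ d x y + d y z) :
    PseudoMetricSpace X where
  dist := d
  dist_self := hd_refl
  dist_comm := hd_symm
  dist_triangle := hd_tri

theorem le_pseudoMetricSpace_topology_of_continuous_dist {t : TopologicalSpace X}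
    (m : PseudoMetricSpace X) (h : ∀ x, Continuous[t, _] (dist x)) :
    t ≤ m.toUniformSpace.toTopologicalSpace := by
  intro s hs
  refine (@isOpen_iff_mem_nhds _ t _).2 fun x hx => ?_
  obtain ⟨ε, hε, hεs⟩ := Metric.isOpen_iff.1 hs x hx
  refine mem_of_superset (IsOpen.mem_nhds ((isOpen_Iio (a := ε)).preimage (h x)) (by simpa)) ?_
  intro y hy
  exact hεs (by simpa [dist_comm] using hy)

theorem separableSpace_of_le {s t : TopologicalSpace X} (hst : s ≤ t) [h : @SeparableSpace X s] :
    @SeparableSpace X t :=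
  @DenseRange.separableSpace _ _ s h t _ (Function.surjective_id.denseRange)
    (continuous_id_of_le hst)

theorem opensMeasurableSpace_of_le {s t : TopologicalSpace X} [MeasurableSpace X] (hst : s ≤ t)
    [h : @OpensMeasurableSpace X s _] : @OpensMeasurableSpace X t _ :=
  @OpensMeasurableSpace.mk X t _ ((borel_anti hst).trans h.borel_le)

end Topology

theorem monge_kantorovich_duality_pseudo_metric_general
    {X : Type*} [t : TopologicalSpace X] [SeparableSpace X] [MeasurableSpace X]
    [OpensMeasurableSpace X]
    (μ₁ μ₂ : Measure X) [IsFiniteMeasure μ₁] [IsFiniteMeasure μ₂]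
    (hmass : μ₁ univ = μ₂ univ)
    (d : X → X → ℝ) (hd_cont : Continuous fun p : X × X => d p.1 p.2)
    (hd_refl : ∀ x, d x x = 0)
    (hd_symm : ∀ x y, d x y = d y x)
    (hd_tri : ∀ x y z, d x z ≤ d x y + d y z)
    (hd_int₁ : ∀ x, Integrable (d x) μ₁) (hd_int₂ : ∀ x, Integrable (d x) μ₂) :
    sInf {r : ℝ | ∃ π : Measure (X × X),
        π.map Prod.fst = μ₁ ∧ π.map Prod.snd = μ₂ ∧
        r = ∫ p, d p.1 p.2 ∂π}
      = sSup {r : ℝ | ∃ φ : X → ℝ, Continuous φ ∧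
        (∀ x y, |φ x - φ y| ≤ d x y) ∧
        r = (∫ x, φ x ∂μ₁) - ∫ x, φ x ∂μ₂} := by
  let m := pseudoMetricSpaceOfDist d hd_refl hd_symm hd_tri
  have hle := le_pseudoMetricSpace_topology_of_continuous_dist m hd_cont.uncurry_left
  have := separableSpace_of_le hle
  have := opensMeasurableSpace_of_le hle
  have hcoupling (π : Measure (X × X)) :
      IsCoupling π μ₁ μ₂ ↔ π.map Prod.fst = μ₁ ∧ π.map Prod.snd = μ₂ :=
    ⟨fun h => ⟨h.map_fst, h.map_snd⟩, fun h => ⟨h.1, h.2⟩⟩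
  have hdist (x y : X) : dist x y = d x y := rfl
  have hlipschitz (φ : X → ℝ) :
      LipschitzWith 1 φ ↔ Continuous[t, _] φ ∧ ∀ x y, |φ x - φ y| ≤ d x y := by
    have : LipschitzWith 1 φ ↔ ∀ x y, |φ x - φ y| ≤ d x y := by
      simp only [lipschitzWith_iff_dist_le_mul, Real.dist_eq, NNReal.coe_one, one_mul, hdist]
    rw [← this]
    exact ⟨fun h => ⟨continuous_le_dom hle h.continuous, h⟩, And.right⟩
  simpa only [hcoupling, hlipschitz, hdist, and_assoc] using
    sInf_integral_dist_eq_sSup_integral_sub hmass hd_int₁ hd_int₂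

/-- Monge–Kantorovich duality for a bounded continuous pseudo-metric cost
(Lemma 3.3 of Hairer–Mattingly): for finite positive measures of equal mass,
`inf_{π ∈ C(μ₁,μ₂)} ∫ d dπ = sup { ∫ φ dμ₁ - ∫ φ dμ₂ : φ d-Lipschitz with constant 1 }`. -/
theorem monge_kantorovich_duality_pseudo_metric
    {X : Type*} [MetricSpace X] [TopologicalSpace.SeparableSpace X] [CompleteSpace X]
    [MeasurableSpace X] [BorelSpace X]
    (μ₁ μ₂ : Measure X) [IsFiniteMeasure μ₁] [IsFiniteMeasure μ₂]
    (hmass : μ₁ Set.univ = μ₂ Set.univ)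
    (d : X → X → ℝ) (hd_cont : Continuous fun p : X × X => d p.1 p.2)
    (hd_nonneg : ∀ x y, 0 ≤ d x y)
    (hd_refl : ∀ x, d x x = 0)
    (hd_symm : ∀ x y, d x y = d y x)
    (hd_tri : ∀ x y z, d x z ≤ d x y + d y z)
    (Cd : ℝ) (hd_bdd : ∀ x y, d x y ≤ Cd) :
    sInf {r : ℝ | ∃ π : Measure (X × X),
        π.map Prod.fst = μ₁ ∧ π.map Prod.snd = μ₂ ∧
        r = ∫ p, d p.1 p.2 ∂π}
      = sSup {r : ℝ | ∃ φ : X → ℝ, Continuous φ ∧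
        (∀ x y, |φ x - φ y| ≤ d x y) ∧
        r = (∫ x, φ x ∂μ₁) - ∫ x, φ x ∂μ₂} := by
  have hd_int (μ : Measure X) [IsFiniteMeasure μ] (x : X) : Integrable (d x) μ :=
    .of_bound (hd_cont.uncurry_left x).measurable.aestronglyMeasurable Cd
      (ae_of_all _ fun y => (abs_of_nonneg (hd_nonneg x y)).trans_le (hd_bdd x y))
  exact monge_kantorovich_duality_pseudo_metric_general μ₁ μ₂ hmass d hd_cont hd_refl hd_symm
    hd_tri (hd_int μ₁) (hd_int μ₂)
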